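/- arXiv:1905.13165 — 2 statements merged into one kernel-verified Lean document; each statement's English description precedes it below -/
import Mathlib

section
/- For every k ≥ 1, Σ_{v,h≥0} (v+h) · D_{k,v,h} = (3k−2) · (2k−3)!!; equivalently, the expected total number of dominoes in a uniformly random configuration of the 2×k memory game is (3k−2)/(2k−1). -/
/-! Exchanging the order of summation, `∑ (v + h) D_{k,v,h}` counts the pairs `(P, e)` where `P` is a
configuration and `e ∈ P` is a domino. For a fixed two-element set `e` of cells, removing `e` identifies
the configurations containing `e` with the pair partitions of the remaining `2k - 2` cells
(`card_pairings_mem`), of which there are `(2k-3)!!` (`card_pairings`). It remains to count the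
domino positions: `k` vertical and `2(k-1)` horizontal ones, so `3k - 2` in all. -/

/-- A cell of the `2 × k` array. -/
abbrev Cell (k : ℕ) := Fin 2 × Fin k

/-- `P` is a partition of the cells of the `2 × k` array into (unordered) pairs,
i.e., a configuration of the `2 × k` game of memory (with indistinguishable pairs). -/
def IsPairPartition {k : ℕ} (P : Finset (Finset (Cell k))) : Prop :=
  (∀ p ∈ P, p.card = 2) ∧ (∀ p ∈ P, ∀ q ∈ P, p ≠ q → p ∩ q = ∅) ∧
    (∀ x : Cell k, ∃ p ∈ P, x ∈ p)

/-- `p` is a vertical cell-pair (vertical domino position). -/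
def IsVert {k : ℕ} (p : Finset (Cell k)) : Prop :=
  ∃ j : Fin k, p = {((0 : Fin 2), j), ((1 : Fin 2), j)}

/-- `p` is a horizontal cell-pair (horizontal domino position). -/
def IsHoriz {k : ℕ} (p : Finset (Cell k)) : Prop :=
  ∃ (i : Fin 2) (j j' : Fin k), (j' : ℕ) = (j : ℕ) + 1 ∧ p = {(i, j), (i, j')}

/-- An edge of the `2 × k` grid graph (two cells agreeing in one coordinate and
differing by exactly 1 in the other) is exactly a vertical or horizontal cell-pair. -/
def IsGridEdge {k : ℕ} (e : Finset (Cell k)) : Prop := IsVert e ∨ IsHoriz e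

open scoped Classical in
/-- `D k v h`: the number of configurations of the `2 × k` game of memory having
exactly `v` vertical and exactly `h` horizontal dominoes. -/
noncomputable def D (k v h : ℕ) : ℕ :=
  (Finset.univ.filter fun P : Finset (Finset (Cell k)) =>
    IsPairPartition P ∧ (P.filter fun p => IsVert p).card = v ∧
      (P.filter fun p => IsHoriz p).card = h).card

open scoped Classical in
/-- `rho j k v h`: the sum, over all choices of a set `V` of `v` vertical cell-pairs
and a set `H` of `h` horizontal cell-pairs such that the chosen pairs are pairwise
disjoint, of the number of `j`-edge matchings of the subgraph of the `2 × k` grid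
graph induced on the cells not belonging to any chosen pair.
(Counted as triples `(V, H, M)`.) -/
noncomputable def rho (j k v h : ℕ) : ℕ :=
  (Finset.univ.filter fun T :
      Finset (Finset (Cell k)) × Finset (Finset (Cell k)) × Finset (Finset (Cell k)) =>
    (∀ p ∈ T.1, IsVert p) ∧ T.1.card = v ∧
    (∀ p ∈ T.2.1, IsHoriz p) ∧ T.2.1.card = h ∧
    (∀ p ∈ T.1 ∪ T.2.1, ∀ q ∈ T.1 ∪ T.2.1, p ≠ q → p ∩ q = ∅) ∧
    (∀ e ∈ T.2.2, IsGridEdge e) ∧ T.2.2.card = j ∧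
    (∀ e ∈ T.2.2, ∀ f ∈ T.2.2, e ≠ f → e ∩ f = ∅) ∧
    (∀ e ∈ T.2.2, ∀ p ∈ T.1 ∪ T.2.1, e ∩ p = ∅)).card

/-- `df n` is the double factorial `(2n-1)!! = (2n)! / (2^n n!)`, with
`df 0 = (-1)!! = 1`. -/
def df (n : ℕ) : ℕ := (2 * n).factorial / (2 ^ n * n.factorial)

open Finset

open scoped Classical in
/-- The partitions of the finite set `S` into two-element sets. -/
noncomputable def pairings {α : Type*} (S : Finset α) : Finset (Finset (Finset α)) :=
  S.powerset.powerset.filter fun P =>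
    (∀ p ∈ P, p.card = 2) ∧ (∀ p ∈ P, ∀ q ∈ P, p ≠ q → Disjoint p q) ∧ ∀ x ∈ S, ∃ p ∈ P, x ∈ p

lemma mem_pairings {α : Type*} {S : Finset α} {P : Finset (Finset α)} :
    P ∈ pairings S ↔ (∀ p ∈ P, p ⊆ S) ∧ (∀ p ∈ P, p.card = 2) ∧
      (∀ p ∈ P, ∀ q ∈ P, p ≠ q → Disjoint p q) ∧ ∀ x ∈ S, ∃ p ∈ P, x ∈ p := by
  classical
  simp only [pairings, mem_filter, mem_powerset, subset_iff (s₁ := P)]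

open scoped Classical in
/-- Deleting the pair `p` is a bijection from the pairings of `S` that contain `p` to the pairings
of `S \ p`. -/
lemma card_pairings_mem {α : Type*} {S p : Finset α} (hp : p ⊆ S) (h2 : p.card = 2) :
    ((pairings S).filter fun P => p ∈ P).card = (pairings (S \ p)).card := by
  have hne : p.Nonempty := by rw [← card_pos]; omega
  have hnot : ∀ Q ∈ pairings (S \ p), p ∉ Q := by
    intro Q hQ hpQ
    obtain ⟨x, hx⟩ := hne
    have := (mem_pairings.1 hQ).1 p hpQ hx
    simp [hx] at this
  refine card_nbij' (fun P => P.erase p) (fun Q => insert p Q) ?_ ?_ ?_ ?_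
  · intro P hP
    simp only [coe_filter, Set.mem_ofPred_eq, mem_pairings] at hP
    obtain ⟨⟨h1, h3, h4, h5⟩, hpP⟩ := hP
    simp only [mem_coe, mem_pairings, mem_erase, mem_sdiff]
    refine ⟨fun q hq => ?_, fun q hq => h3 q hq.2, fun q hq r hr => h4 q hq.2 r hr.2, ?_⟩
    · exact subset_sdiff.2 ⟨h1 q hq.2, h4 q hq.2 p hpP hq.1⟩
    · rintro x ⟨hx, hxp⟩
      obtain ⟨q, hq, hxq⟩ := h5 x hx
      exact ⟨q, ⟨by rintro rfl; exact hxp hxq, hq⟩, hxq⟩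
  · intro Q hQ
    obtain ⟨h1, h3, h4, h5⟩ := mem_pairings.1 hQ
    have hd : ∀ q ∈ Q, Disjoint q p := fun q hq => (subset_sdiff.1 (h1 q hq)).2
    simp only [coe_filter, Set.mem_ofPred_eq, mem_pairings, mem_insert, true_or, and_true,
      forall_eq_or_imp, exists_eq_or_imp]
    refine ⟨⟨hp, fun q hq => (subset_sdiff.1 (h1 q hq)).1⟩, ⟨h2, h3⟩,
      ⟨⟨fun h => absurd rfl h, fun q hq _ => (hd q hq).symm⟩,
        fun q hq => ⟨fun _ => hd q hq, fun r hr => h4 q hq r hr⟩⟩, fun x hx => ?_⟩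
    by_cases hxp : x ∈ p
    · exact Or.inl hxp
    · exact Or.inr (h5 x (mem_sdiff.2 ⟨hx, hxp⟩))
  · intro P hP
    exact insert_erase (mem_filter.1 hP).2
  · intro Q hQ
    exact erase_insert (hnot Q hQ)

open scoped Classical in
/-- Pairings of `S` are classified by the partner `y` of a fixed element `x`. -/
lemma card_pairings_eq_sum {α : Type*} {S : Finset α} {x : α} (hx : x ∈ S) :
    (pairings S).card = ∑ y ∈ S.erase x, (pairings (S \ {x, y})).card := by
  have key : pairings S = (S.erase x).biUnion fun y =>
      (pairings S).filter fun P => ({x, y} : Finset α) ∈ P := by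
    ext P
    simp only [mem_biUnion, mem_filter, mem_erase]
    refine ⟨fun hP => ?_, fun ⟨_, _, h, _⟩ => h⟩
    obtain ⟨h1, h3, h4, h5⟩ := mem_pairings.1 hP
    obtain ⟨p, hp, hxp⟩ := h5 x hx
    have hc : (p.erase x).card = 1 := by rw [card_erase_of_mem hxp, h3 p hp]
    obtain ⟨y, hy⟩ := card_eq_one.1 hc
    have hpe : p = {x, y} := by rw [← insert_erase hxp, hy]
    have hyp : y ∈ p.erase x := by simp [hy]
    exact ⟨y, ⟨(mem_erase.1 hyp).1, h1 p hp (mem_erase.1 hyp).2⟩, hP, hpe ▸ hp⟩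
  rw [key, card_biUnion]
  · refine sum_congr rfl fun y hy => ?_
    obtain ⟨hyx, hyS⟩ := mem_erase.1 hy
    exact card_pairings_mem (by simp [insert_subset_iff, hx, hyS]) (card_pair hyx.symm)
  · intro y hy z hz hyz
    rw [Function.onFun, disjoint_left]
    intro P hP hP'
    obtain ⟨hPS, h1⟩ := mem_filter.1 hP
    have h2 := (mem_filter.1 hP').2
    have hne : ({x, y} : Finset α) ≠ {x, z} := by
      intro h
      have : y ∈ ({x, z} : Finset α) := h ▸ (by simp)
      simp only [mem_insert, mem_singleton] at this
      exact this.elim (mem_erase.1 hy).1 hyz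
    exact disjoint_left.1 ((mem_pairings.1 hPS).2.2.1 _ h1 _ h2 hne)
      (mem_insert_self x _) (mem_insert_self x _)

/-- The division in the definition of `df` is exact. -/
lemma df_spec (n : ℕ) : df n * (2 ^ n * n.factorial) = (2 * n).factorial := by
  have h : 2 ^ n * n.factorial ∣ (2 * n).factorial := by
    induction n with
    | zero => simp
    | succ n ih =>
      obtain ⟨c, hc⟩ := ih
      refine ⟨(2 * n + 1) * c, ?_⟩
      rw [show 2 * (n + 1) = 2 * n + 1 + 1 by ring, Nat.factorial_succ, Nat.factorial_succ, hc,
        Nat.factorial_succ]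
      ring
  exact Nat.div_mul_cancel h

lemma df_succ (n : ℕ) : df (n + 1) = (2 * n + 1) * df n := by
  have hpos : 0 < 2 ^ (n + 1) * (n + 1).factorial := by positivity
  apply Nat.eq_of_mul_eq_mul_right hpos
  rw [df_spec, show 2 * (n + 1) = 2 * n + 1 + 1 by ring, Nat.factorial_succ, Nat.factorial_succ,
    ← df_spec n, Nat.factorial_succ]
  ring

lemma card_pairings {α : Type*} (n : ℕ) (S : Finset α) (hS : S.card = 2 * n) :
    (pairings S).card = df n := by
  classical
  induction n generalizing S with
  | zero =>
    have hS0 : S = ∅ := by simpa using hS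
    subst hS0
    have : pairings (∅ : Finset α) = {∅} := by
      ext P
      rw [mem_pairings, mem_singleton]
      constructor
      · rintro ⟨h1, h2, -⟩
        refine eq_empty_of_forall_notMem fun p hp => ?_
        have h3 := h2 p hp
        rw [subset_empty.1 (h1 p hp)] at h3
        simp at h3
      · rintro rfl
        simp
    simp [this, df]
  | succ n ih =>
    obtain ⟨x, hx⟩ : S.Nonempty := by rw [← card_pos]; omega
    rw [card_pairings_eq_sum hx, sum_congr rfl (g := fun _ => df n), sum_const,
      card_erase_of_mem hx, hS, df_succ, smul_eq_mul]
    · congr 1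
    · intro y hy
      obtain ⟨hyx, hyS⟩ := mem_erase.1 hy
      apply ih
      rw [card_sdiff_of_subset (by simp [insert_subset_iff, hx, hyS]), hS, card_pair hyx.symm]
      omega

open scoped Classical in
/-- Fibrewise summation over the joint values of two statistics `f` and `g`, with `finsum`. -/
lemma finsum_joint {α : Type*} (s : Finset α) (f g : α → ℕ) :
    (∑ᶠ v : ℕ, ∑ᶠ h : ℕ, (v + h) * (s.filter fun P => f P = v ∧ g P = h).card) =
      ∑ P ∈ s, (f P + g P) := by
  have inner : ∀ v, (∑ᶠ h : ℕ, (v + h) * (s.filter fun P => f P = v ∧ g P = h).card) =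
      ∑ P ∈ s, if f P = v then v + g P else 0 := by
    intro v
    rw [finsum_eq_sum_of_support_subset (s := s.image g)]
    · simp_rw [card_filter, mul_sum]
      rw [sum_comm]
      refine sum_congr rfl fun P hP => ?_
      rw [sum_eq_single_of_mem (g P) (mem_image_of_mem g hP)]
      · simp
      · intro h _ hne
        simp [hne.symm]
    · intro h hh
      have hc := right_ne_zero_of_mul (Function.mem_support.1 hh)
      obtain ⟨P, hP⟩ := card_ne_zero.1 hc
      obtain ⟨hPs, -, rfl⟩ := mem_filter.1 hP
      exact mem_coe.2 (mem_image_of_mem g hPs)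
  simp_rw [inner]
  rw [finsum_eq_sum_of_support_subset (s := s.image f)]
  · rw [sum_comm]
    refine sum_congr rfl fun P hP => ?_
    rw [sum_ite_eq, if_pos (mem_image_of_mem f hP)]
  · intro v hv
    obtain ⟨P, hP, h⟩ := exists_ne_zero_of_sum_ne_zero (Function.mem_support.1 hv)
    have : f P = v := by
      by_contra hne
      simp [hne] at h
    exact mem_coe.2 (this ▸ mem_image_of_mem f hP)

lemma mem_pairings_univ {k : ℕ} {P : Finset (Finset (Cell k))} :
    P ∈ pairings (univ : Finset (Cell k)) ↔ IsPairPartition P := by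
  simp [mem_pairings, IsPairPartition, disjoint_iff_inter_eq_empty]

lemma IsVert.card_eq {k : ℕ} {p : Finset (Cell k)} (h : IsVert p) : p.card = 2 := by
  obtain ⟨j, rfl⟩ := h
  exact card_pair (by simp)

lemma IsHoriz.card_eq {k : ℕ} {p : Finset (Cell k)} (h : IsHoriz p) : p.card = 2 := by
  obtain ⟨i, j, j', hj, rfl⟩ := h
  refine card_pair fun h => ?_
  have := congrArg (fun c : Cell k => (c.2 : ℕ)) h
  simp only at this
  omega

open scoped Classical in
lemma card_vert (k : ℕ) : (univ.filter fun p : Finset (Cell k) => IsVert p).card = k := by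
  have : (univ.filter fun p : Finset (Cell k) => IsVert p) =
      univ.image fun j : Fin k => ({((0 : Fin 2), j), ((1 : Fin 2), j)} : Finset (Cell k)) := by
    ext p
    rw [mem_filter, mem_image]
    simp [IsVert, eq_comm]
  rw [this, card_image_of_injective, card_univ, Fintype.card_fin]
  intro a b hab
  have h : ((0 : Fin 2), a) ∈ ({((0 : Fin 2), b), ((1 : Fin 2), b)} : Finset (Cell k)) := by
    simp only at hab
    rw [← hab]
    simp
  simpa using h

open scoped Classical in
lemma card_horiz (n : ℕ) :
    (univ.filter fun p : Finset (Cell (n + 1)) => IsHoriz p).card = 2 * n := by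
  have : (univ.filter fun p : Finset (Cell (n + 1)) => IsHoriz p) =
      univ.image fun c : Fin 2 × Fin n =>
        ({(c.1, c.2.castSucc), (c.1, c.2.succ)} : Finset (Cell (n + 1))) := by
    ext p
    rw [mem_filter]
    simp only [IsHoriz, mem_univ, true_and, mem_image, Prod.exists]
    constructor
    · rintro ⟨i, j, j', hj, rfl⟩
      have hlt : (j : ℕ) < n := by have := j'.2; omega
      refine ⟨i, ⟨j, hlt⟩, ?_⟩
      have : j' = Fin.succ ⟨j, hlt⟩ := Fin.ext (by simpa using hj)
      rw [this]
      rfl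
    · rintro ⟨i, j, rfl⟩
      exact ⟨i, j.castSucc, j.succ, by simp, rfl⟩
  rw [this, card_image_of_injective]
  · simp
  rintro ⟨i, a⟩ ⟨i', b⟩ hab
  simp only at hab
  have h1 : (i, a.castSucc) ∈ ({(i', b.castSucc), (i', b.succ)} : Finset (Cell (n + 1))) := by
    rw [← hab]; simp
  have h2 : (i, a.succ) ∈ ({(i', b.castSucc), (i', b.succ)} : Finset (Cell (n + 1))) := by
    rw [← hab]; simp
  simp only [mem_insert, mem_singleton, Prod.mk.injEq, Fin.ext_iff, Fin.val_castSucc,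
    Fin.val_succ] at h1 h2 ⊢
  omega

open scoped Classical in
/-- If `Q` only holds for two-element sets, the total number of `Q`-pairs over all configurations is
the number of sets satisfying `Q` times `(2n-1)!!`. -/
lemma sum_card_filter (n : ℕ) (Q : Finset (Cell (n + 1)) → Prop) (hQ : ∀ p, Q p → p.card = 2) :
    ∑ P ∈ pairings (univ : Finset (Cell (n + 1))), (P.filter fun p => Q p).card =
      (univ.filter fun p => Q p).card * df n := by
  have h : ∀ P : Finset (Finset (Cell (n + 1))), (P.filter fun p => Q p).card =
      ∑ p ∈ univ.filter (fun p => Q p), if p ∈ P then 1 else 0 := by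
    intro P
    rw [← card_filter, filter_filter]
    congr 1
    ext p
    simp [and_comm]
  rw [sum_congr rfl fun P _ => h P, sum_comm, sum_congr rfl (g := fun _ => df n), sum_const, smul_eq_mul]
  intro p hp
  have h2 := hQ p (mem_filter.1 hp).2
  have h3 := card_pairings_mem (subset_univ p) h2
  rw [card_pairings n] at h3
  · rw [← card_filter, ← h3]
    congr!
  · have h4 : (univ \ p).card = 2 * n := by
      rw [card_sdiff_of_subset (subset_univ p), h2, card_univ]
      simp only [Fintype.card_prod, Fintype.card_fin]
      omega
    convert h4

/-- For `k ≥ 1`,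
`Σ_{v,h≥0} (v+h) D_{k,v,h} = (3k-2)(2k-3)!!` (note `(2k-3)!! = df (k-1)`);
equivalently, the expected total number of dominoes in a uniformly random
configuration of the `2 × k` memory game is `(3k-2)/(2k-1)`. -/
theorem mean_domino_count (k : ℕ) (hk : 1 ≤ k) :
    (∑ᶠ v : ℕ, ∑ᶠ h : ℕ, (v + h) * D k v h) = (3 * k - 2) * df (k - 1) := by
  classical
  obtain ⟨n, rfl⟩ : ∃ n, k = n + 1 := ⟨k - 1, by omega⟩
  have hD : ∀ v h, D (n + 1) v h = ((pairings (univ : Finset (Cell (n + 1)))).filter fun P =>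
      (P.filter fun p => IsVert p).card = v ∧ (P.filter fun p => IsHoriz p).card = h).card := by
    intro v h
    unfold D
    congr 1
    ext P
    simp [mem_pairings_univ]
  simp_rw [hD]
  rw [finsum_joint (pairings (univ : Finset (Cell (n + 1))))
    (fun P => (P.filter fun p => IsVert p).card) (fun P => (P.filter fun p => IsHoriz p).card),
    sum_add_distrib, sum_card_filter n _ fun p h => h.card_eq,
    sum_card_filter n _ fun p h => h.card_eq, card_vert, card_horiz, ← add_mul]
  congr 1
  omega
end

section
/- For every m ∈ ℕ, lim_{k→∞} (1/(2k−1)!!) · Σ_{v,h≥0} v(v−1)⋯(v−m+1) · D_{k,v,h} = (1/2)^m; that is, the m-th factorial moment of the number of vertical dominoes in a uniformly random configuration of the 2×k memory game tends to 2^{−m} as k → ∞. -/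
open Finset

/-! ### Counting perfect matchings of a finite set -/

section Matchings

variable {α : Type*} [DecidableEq α]

/-- `P` is a perfect matching of the finite set `s`: a set of pairwise disjoint two-element sets
with union `s`. -/
def IsMatchingOn (s : Finset α) (P : Finset (Finset α)) : Prop :=
  (∀ p ∈ P, p.card = 2) ∧ (∀ p ∈ P, ∀ q ∈ P, p ≠ q → p ∩ q = ∅) ∧
    (∀ x, x ∈ s ↔ ∃ p ∈ P, x ∈ p)

open scoped Classical in
/-- The finite set of perfect matchings of `s`. -/
noncomputable def matchings (s : Finset α) : Finset (Finset (Finset α)) :=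
  s.powerset.powerset.filter (IsMatchingOn s)

lemma mem_matchings {s : Finset α} {P : Finset (Finset α)} :
    P ∈ matchings s ↔ IsMatchingOn s P := by
  classical
  simp only [matchings, mem_filter, mem_powerset, and_iff_right_iff_imp]
  intro h p hp
  rw [mem_powerset]
  exact fun x hx => (h.2.2 x).2 ⟨p, hp, hx⟩

/-- In a perfect matching the pair containing a given element is unique. -/
lemma IsMatchingOn.eq_of_mem {s : Finset α} {P : Finset (Finset α)} (h : IsMatchingOn s P)
    {p q : Finset α} (hp : p ∈ P) (hq : q ∈ P) {x : α} (hxp : x ∈ p) (hxq : x ∈ q) : p = q := by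
  by_contra hne
  have := h.2.1 p hp q hq hne
  have hx : x ∈ p ∩ q := mem_inter.2 ⟨hxp, hxq⟩
  simp [this] at hx

/-- Removing a matching `Q` of `t ⊆ s` is a bijection from the matchings of `s` containing `Q` to
the matchings of `s \ t`. -/
lemma card_matchings_superset {s t : Finset α} (hts : t ⊆ s) {Q : Finset (Finset α)}
    (hQ : IsMatchingOn t Q) :
    ((matchings s).filter fun P => Q ⊆ P).card = (matchings (s \ t)).card := by
  refine card_bij' (fun P _ => P \ Q) (fun P _ => P ∪ Q) ?_ ?_ ?_ ?_
  · intro P hP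
    rw [mem_filter, mem_matchings] at hP
    obtain ⟨hP, hQP⟩ := hP
    rw [mem_matchings]
    refine ⟨fun p hp => hP.1 p (mem_sdiff.1 hp).1, fun p hp q hq =>
      hP.2.1 p (mem_sdiff.1 hp).1 q (mem_sdiff.1 hq).1, fun x => ?_⟩
    rw [mem_sdiff, hP.2.2, hQ.2.2]
    constructor
    · rintro ⟨⟨p, hp, hx⟩, hn⟩
      exact ⟨p, mem_sdiff.2 ⟨hp, fun h => hn ⟨p, h, hx⟩⟩, hx⟩
    · rintro ⟨p, hp, hx⟩
      rw [mem_sdiff] at hp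
      refine ⟨⟨p, hp.1, hx⟩, ?_⟩
      rintro ⟨q, hq, hxq⟩
      exact hp.2 (hP.eq_of_mem hp.1 (hQP hq) hx hxq ▸ hq)
  · intro P hP
    rw [mem_matchings] at hP
    rw [mem_filter, mem_matchings]
    have key : ∀ p ∈ P, ∀ q ∈ Q, p ∩ q = ∅ := by
      intro p hp q hq
      rw [eq_empty_iff_forall_notMem]
      intro x hx
      rw [mem_inter] at hx
      have h1 := (hP.2.2 x).2 ⟨p, hp, hx.1⟩
      have h2 := (hQ.2.2 x).2 ⟨q, hq, hx.2⟩
      exact (mem_sdiff.1 h1).2 h2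
    refine ⟨⟨?_, ?_, ?_⟩, subset_union_right⟩
    · intro p hp
      exact (mem_union.1 hp).elim (hP.1 p) (hQ.1 p)
    · intro p hp q hq hne
      rcases mem_union.1 hp with hp | hp <;> rcases mem_union.1 hq with hq | hq
      · exact hP.2.1 p hp q hq hne
      · exact key p hp q hq
      · rw [inter_comm]; exact key q hq p hp
      · exact hQ.2.1 p hp q hq hne
    · intro x
      have h1 := hP.2.2 x
      have h2 := hQ.2.2 x
      have h3 : x ∈ s ↔ x ∈ s \ t ∨ x ∈ t := by
        rw [mem_sdiff]
        have := @hts x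
        tauto
      rw [h3, h1, h2]
      simp only [mem_union, or_and_right, exists_or]
  · intro P hP
    exact sdiff_union_of_subset (mem_filter.1 hP).2
  · intro P hP
    rw [mem_matchings] at hP
    refine union_sdiff_cancel_right ?_
    rw [disjoint_left]
    intro p hp hpQ
    obtain ⟨x, hx⟩ : p.Nonempty := by
      rw [← card_pos, hP.1 p hp]; norm_num
    have h1 := (hP.2.2 x).2 ⟨p, hp, hx⟩
    exact (mem_sdiff.1 h1).2 ((hQ.2.2 x).2 ⟨p, hpQ, hx⟩)

lemma isMatchingOn_singleton {p : Finset α} (hp : p.card = 2) : IsMatchingOn p {p} := by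
  refine ⟨by simpa using hp, ?_, by simp⟩
  intro a ha b hb hne
  rw [mem_singleton] at ha hb
  exact absurd (ha.trans hb.symm) hne

/-- In a perfect matching, `x` has exactly one partner. -/
lemma card_partners {s : Finset α} {P : Finset (Finset α)} (h : IsMatchingOn s P) {x : α}
    (hx : x ∈ s) : ((s.erase x).filter fun y => {x, y} ∈ P).card = 1 := by
  obtain ⟨p, hp, hxp⟩ := (h.2.2 x).1 hx
  obtain ⟨a, b, hab, rfl⟩ := card_eq_two.1 (h.1 p hp)
  obtain ⟨y, hy, hpy⟩ : ∃ y, y ≠ x ∧ ({a, b} : Finset α) = {x, y} := by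
    rw [mem_insert, mem_singleton] at hxp
    rcases hxp with rfl | rfl
    · exact ⟨b, hab.symm, rfl⟩
    · exact ⟨a, hab, pair_comm _ _⟩
  rw [hpy] at hp
  rw [card_eq_one]
  refine ⟨y, ?_⟩
  ext z
  rw [mem_filter, mem_singleton, mem_erase]
  constructor
  · rintro ⟨⟨hzx, -⟩, hz⟩
    have e := h.eq_of_mem hz hp (mem_insert_self x _) (mem_insert_self x _)
    have : z ∈ ({x, y} : Finset α) := e ▸ by simp
    rw [mem_insert, mem_singleton] at this
    exact this.resolve_left hzx
  · rintro rfl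
    exact ⟨⟨hy, (h.2.2 z).2 ⟨_, hp, by simp⟩⟩, hp⟩

/-- A set of `2n` elements has `1 · 3 ⋯ (2n-1)` perfect matchings: a fixed element can be paired
with any of the `2n-1` others. -/
lemma card_matchings (n : ℕ) : ∀ s : Finset α, s.card = 2 * n →
    (matchings s).card = ∏ i ∈ range n, (2 * i + 1) := by
  induction n with
  | zero =>
    intro s hs
    have hs : s = ∅ := by simpa using hs
    subst hs
    rw [prod_range_zero, card_eq_one]
    refine ⟨∅, ?_⟩
    ext P
    rw [mem_matchings, mem_singleton]
    constructor
    · intro h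
      rw [eq_empty_iff_forall_notMem]
      intro p hp
      obtain ⟨x, hx⟩ : p.Nonempty := by
        rw [← card_pos, h.1 p hp]; norm_num
      simpa using (h.2.2 x).2 ⟨p, hp, hx⟩
    · rintro rfl
      simp [IsMatchingOn]
  | succ n ih =>
    intro s hs
    obtain ⟨x, hx⟩ : s.Nonempty := by
      rw [← card_pos]; omega
    have hdc := sum_card_bipartiteAbove_eq_sum_card_bipartiteBelow
      (s := matchings s) (t := s.erase x) (fun P y => ({x, y} : Finset α) ∈ P)
    have hl : ∀ P ∈ matchings s,
        (bipartiteAbove (fun (P : Finset (Finset α)) y => ({x, y} : Finset α) ∈ P)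
          (s.erase x) P).card = 1 :=
      fun P hP => card_partners (mem_matchings.1 hP) hx
    have hr : ∀ y ∈ s.erase x,
        (bipartiteBelow (fun (P : Finset (Finset α)) y => ({x, y} : Finset α) ∈ P)
          (matchings s) y).card = ∏ i ∈ range n, (2 * i + 1) := by
      intro y hy
      rw [mem_erase] at hy
      have h2 : ({x, y} : Finset α).card = 2 := card_pair hy.1.symm
      have hsub : ({x, y} : Finset α) ⊆ s := by
        intro z hz
        rw [mem_insert, mem_singleton] at hz
        rcases hz with rfl | rfl
        · exact hx
        · exact hy.2
      have := card_matchings_superset hsub (isMatchingOn_singleton h2)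
      simp only [singleton_subset_iff] at this
      unfold bipartiteBelow
      rw [this]
      apply ih
      rw [card_sdiff_of_subset hsub]
      omega
    rw [sum_congr rfl hl, sum_congr rfl hr, sum_const, sum_const, card_erase_of_mem hx, hs] at hdc
    rw [prod_range_succ]
    simp only [smul_eq_mul, mul_one] at hdc
    rw [hdc, mul_comm]
    congr 1

end Matchings

/-! ### The double factorial -/

lemma df_eq_prod (n : ℕ) : df n = ∏ i ∈ range n, (2 * i + 1) := by
  have h : (2 * n).factorial = (∏ i ∈ range n, (2 * i + 1)) * (2 ^ n * n.factorial) := by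
    induction n with
    | zero => simp
    | succ n ih =>
      rw [show 2 * (n + 1) = 2 * n + 1 + 1 by ring, Nat.factorial_succ, Nat.factorial_succ, ih,
        prod_range_succ, Nat.factorial_succ, pow_succ]
      ring
  rw [df, h]
  exact Nat.mul_div_cancel _ (by positivity)

lemma df_pos (n : ℕ) : 0 < df n := by
  rw [df_eq_prod]
  exact prod_pos fun i _ => by omega

/-! ### The exact factorial moment -/

lemma isPairPartition_iff {k : ℕ} (P : Finset (Finset (Cell k))) :
    IsPairPartition P ↔ P ∈ matchings (univ : Finset (Cell k)) := by
  simp [mem_matchings, IsPairPartition, IsMatchingOn]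

/-- The vertical pair in column `j`. -/
def vert {k : ℕ} (j : Fin k) : Finset (Cell k) := {((0 : Fin 2), j), ((1 : Fin 2), j)}

lemma mem_vert {k : ℕ} {j : Fin k} {x : Cell k} : x ∈ vert j ↔ x.2 = j := by
  obtain ⟨a, b⟩ := x
  simp only [vert, mem_insert, mem_singleton, Prod.mk.injEq]
  fin_cases a <;> simp

lemma vert_injective {k : ℕ} : Function.Injective (vert (k := k)) := by
  intro a b h
  have : ((0 : Fin 2), a) ∈ vert b := h ▸ mem_vert.2 rfl
  exact mem_vert.1 this

lemma isMatchingOn_vert {k : ℕ} (S : Finset (Fin k)) :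
    IsMatchingOn (univ ×ˢ S) (S.image vert) := by
  refine ⟨?_, ?_, ?_⟩
  · simp only [mem_image, forall_exists_index, and_imp]
    rintro _ j - rfl
    exact card_pair (by simp)
  · simp only [mem_image, forall_exists_index, and_imp]
    rintro _ i - rfl _ j - rfl hne
    rw [eq_empty_iff_forall_notMem]
    intro x hx
    rw [mem_inter, mem_vert, mem_vert] at hx
    exact hne (by rw [← hx.1, hx.2])
  · intro x
    simp [mem_vert]

lemma card_matchings_vert {k m : ℕ} {S : Finset (Fin k)} (hS : S.card = m) :
    ((matchings (univ : Finset (Cell k))).filter fun P => S.image vert ⊆ P).card = df (k - m) := by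
  rw [card_matchings_superset (subset_univ _) (isMatchingOn_vert S), df_eq_prod]
  apply card_matchings
  rw [card_sdiff_of_subset (subset_univ _), card_product, hS]
  simp
  omega

open scoped Classical in
/-- The `m`-sets of columns all of whose vertical pairs belong to `P` are counted by a binomial
coefficient in the number of vertical dominoes of `P`. -/
lemma card_vert_subsets {k : ℕ} (m : ℕ) (P : Finset (Finset (Cell k))) :
    ((powersetCard m (univ : Finset (Fin k))).filter fun S => S.image vert ⊆ P).card =
      (P.filter fun p => IsVert p).card.choose m := by
  have h1 : (P.filter fun p => IsVert p) = (univ.filter fun j : Fin k => vert j ∈ P).image vert := by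
    ext p
    simp only [mem_filter, mem_image, mem_univ, true_and]
    constructor
    · rintro ⟨hp, j, rfl⟩
      exact ⟨j, hp, rfl⟩
    · rintro ⟨j, hj, rfl⟩
      exact ⟨hj, j, rfl⟩
  rw [h1, card_image_of_injective _ vert_injective, ← card_powersetCard]
  congr 1
  ext S
  simp only [mem_filter, mem_powersetCard, subset_iff, mem_image, mem_univ, true_and]
  constructor
  · rintro ⟨⟨-, hc⟩, h⟩
    exact ⟨fun j hj => h ⟨j, hj, rfl⟩, hc⟩
  · rintro ⟨h, hc⟩
    refine ⟨⟨fun _ _ => trivial, hc⟩, ?_⟩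
    rintro _ ⟨j, hj, rfl⟩
    exact h hj

open scoped Classical in
/-- Exchanging the sum over configurations with the sum over `m`-sets of columns. For `k < m` both
sides vanish. -/
lemma sum_descFactorial (k m : ℕ) :
    ∑ P ∈ matchings (univ : Finset (Cell k)),
      (P.filter fun p => IsVert p).card.descFactorial m = k.descFactorial m * df (k - m) := by
  have hdc := sum_card_bipartiteAbove_eq_sum_card_bipartiteBelow
    (s := matchings (univ : Finset (Cell k))) (t := powersetCard m (univ : Finset (Fin k)))
    (fun P S => S.image vert ⊆ P)
  have hr : ∀ S ∈ powersetCard m (univ : Finset (Fin k)),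
      (bipartiteBelow (fun (P : Finset (Finset (Cell k))) (S : Finset (Fin k)) =>
        S.image vert ⊆ P) (matchings univ) S).card = df (k - m) :=
    fun S hS => card_matchings_vert (mem_powersetCard.1 hS).2
  have hl : ∀ P ∈ matchings (univ : Finset (Cell k)),
      (bipartiteAbove (fun (P : Finset (Finset (Cell k))) (S : Finset (Fin k)) =>
        S.image vert ⊆ P) (powersetCard m univ) P).card =
          (P.filter fun p => IsVert p).card.choose m :=
    fun P _ => card_vert_subsets m P
  rw [sum_congr rfl hr, sum_const, card_powersetCard, card_univ, Fintype.card_fin,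
    sum_congr rfl hl] at hdc
  simp only [Nat.descFactorial_eq_factorial_mul_choose]
  rw [← mul_sum, hdc, smul_eq_mul, mul_assoc]

open scoped Classical in
/-- The double sum over `v` and `h` is a sum over configurations; both indices are bounded by the
total number of sets of cells, so the `finsum`s are genuine finite sums. -/
lemma finsum_D (k : ℕ) (f : ℕ → ℝ) :
    ∑ᶠ v : ℕ, ∑ᶠ h : ℕ, (f v * (D k v h : ℝ)) =
      ∑ P ∈ matchings (univ : Finset (Cell k)), f (P.filter fun p => IsVert p).card := by
  set N := Fintype.card (Finset (Cell k)) + 1 with hN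
  have hlt : ∀ (P : Finset (Finset (Cell k))) (q : Finset (Cell k) → Prop),
      (P.filter q).card < N := fun P q => Nat.lt_succ_of_le (card_le_univ _)
  have hD : ∀ v h, D k v h = ∑ P ∈ matchings (univ : Finset (Cell k)),
      if (P.filter fun p => IsVert p).card = v ∧ (P.filter fun p => IsHoriz p).card = h
        then 1 else 0 := by
    intro v h
    rw [← card_filter, D]
    congr 1
    ext P
    simp [isPairPartition_iff]
  have hD0 : ∀ v h, D k v h ≠ 0 → v < N ∧ h < N := by
    intro v h hne
    rw [D, card_ne_zero] at hne
    obtain ⟨P, hP⟩ := hne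
    obtain ⟨-, -, rfl, rfl⟩ := mem_filter.1 hP
    exact ⟨hlt _ _, hlt _ _⟩
  have hin : ∀ v, ∑ᶠ h : ℕ, (f v * (D k v h : ℝ)) = ∑ h ∈ range N, f v * (D k v h : ℝ) := by
    intro v
    apply finsum_eq_sum_of_support_subset
    intro h hh
    have : D k v h ≠ 0 := by
      rintro h0
      simp [h0] at hh
    simpa using (hD0 v h this).2
  simp only [hin]
  rw [finsum_eq_sum_of_support_subset (s := range N)]
  · simp only [hD, Nat.cast_sum, mul_sum]
    rw [sum_congr rfl fun v _ => sum_comm, sum_comm]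
    refine sum_congr rfl fun P _ => ?_
    rw [sum_eq_single (P.filter fun p => IsVert p).card,
      sum_eq_single (P.filter fun p => IsHoriz p).card]
    · simp
    · intro b _ hb
      simp [hb.symm]
    · intro h
      exact absurd (mem_range.2 (hlt _ _)) h
    · intro b _ hb
      simp [hb.symm]
    · intro h
      exact absurd (mem_range.2 (hlt _ _)) h
  · intro v hv
    obtain ⟨h, -, hh⟩ := exists_ne_zero_of_sum_ne_zero hv
    have : D k v h ≠ 0 := by
      rintro h0
      simp [h0] at hh
    simpa using (hD0 v h this).1

/-! ### The limit -/

open Filter in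
lemma tendsto_ratio : Tendsto (fun n : ℕ => ((n : ℝ) + 1) / (2 * n + 1)) atTop (nhds (1 / 2)) := by
  have h : Tendsto (fun n : ℕ => (1 / 2 : ℝ) + 1 / 2 * (1 / (((2 * n : ℕ) : ℝ) + 1))) atTop
      (nhds (1 / 2 + 1 / 2 * 0)) := by
    refine tendsto_const_nhds.add (Tendsto.const_mul _ ?_)
    exact tendsto_one_div_add_atTop_nhds_zero_nat.comp
      (tendsto_id.const_mul_atTop' (by norm_num : 0 < 2))
  rw [mul_zero, add_zero] at h
  refine h.congr fun n => ?_
  push_cast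
  have : (2 * (n : ℝ) + 1) ≠ 0 := by positivity
  field_simp
  ring

open Filter in
lemma tendsto_moment (m : ℕ) :
    Tendsto (fun k : ℕ => ((k.descFactorial m * df (k - m) : ℕ) : ℝ) / (df k : ℝ))
      atTop (nhds ((1 / 2 : ℝ) ^ m)) := by
  induction m with
  | zero =>
    refine tendsto_const_nhds.congr fun k => ?_
    have : (df k : ℝ) ≠ 0 := by exact_mod_cast (df_pos k).ne'
    simp [this]
  | succ m ih =>
    rw [pow_succ]
    refine (ih.mul (tendsto_ratio.comp (tendsto_sub_atTop_nat (m + 1)))).congr' ?_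
    filter_upwards [eventually_ge_atTop (m + 1)] with k hk
    obtain ⟨n, rfl⟩ := Nat.exists_eq_add_of_le' hk
    have h1 : n + (m + 1) - m = n + 1 := by omega
    have h2 : n + (m + 1) - (m + 1) = n := by omega
    have : (df (n + (m + 1)) : ℝ) ≠ 0 := by exact_mod_cast (df_pos _).ne'
    have h3 : (2 * (n : ℝ) + 1) ≠ 0 := by positivity
    simp only [Function.comp, Nat.descFactorial_succ, h1, h2, df_succ n]
    push_cast
    field_simp

open Filter in
/-- For every `m`, the `m`-th factorial moment of the number of
vertical dominoes in a uniformly random configuration of the `2 × k` memory game,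
`(1/(2k-1)!!) Σ_{v,h} v(v-1)⋯(v-m+1) D_{k,v,h}`, tends to `(1/2)^m` as `k → ∞`. -/
theorem vertical_factorial_moments (m : ℕ) :
    Tendsto
      (fun k : ℕ =>
        (∑ᶠ v : ℕ, ∑ᶠ h : ℕ, ((v.descFactorial m : ℝ) * (D k v h : ℝ))) / (df k : ℝ))
      atTop (nhds ((1 / 2 : ℝ) ^ m)) := by
  refine (tendsto_moment m).congr fun k => ?_
  rw [finsum_D k fun v => (v.descFactorial m : ℝ), ← sum_descFactorial, Nat.cast_sum]
end
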